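/- Fix an integer n ≥ 1, p ∈ (1,∞) with p' = p/(p−1), ε ∈ (1/p', 1), and an integer k ≥ 3. Then for every x ∈ [0,1)^n, T_S f(x + 2⃗^k) = k^{−ε} A_k · T_S(w_k)(x). -/

import Mathlib

open MeasureTheory Set ENNReal

noncomputable section

/-- The half-open axis-parallel cube with corner `a` and side length `l`. -/
def Cube (n : ℕ) (a : Fin n → ℝ) (l : ℝ) : Set (Fin n → ℝ) :=
  Set.univ.pi fun i => Set.Ico (a i) (a i + l)

/-- The uncentered Hardy–Littlewood maximal function over axis-parallel cubes:
`Mg(x) = sup_{Q ∋ x} |Q|⁻¹ ∫_Q g`. -/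
def MaxFn {n : ℕ} (g : (Fin n → ℝ) → ℝ≥0∞) (x : Fin n → ℝ) : ℝ≥0∞ :=
  ⨆ (a : Fin n → ℝ) (l : ℝ) (_ : 0 < l) (_ : x ∈ Cube n a l),
    (volume (Cube n a l))⁻¹ * ∫⁻ y in Cube n a l, g y

/-- The cube of the sparse family `S` with parameters `k, N`:
`[0, 2^{-N})^n` for `k = 0` and `[2^k, 2^k + 2^{-N})^n` for `k ≥ 1`. -/
def sCube (n k N : ℕ) : Set (Fin n → ℝ) :=
  Cube n (fun _ => if k = 0 then 0 else (2:ℝ)^k) ((2:ℝ)^(-(N:ℤ)))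

/-- The sparse operator `T_S g = Σ_{Q ∈ S} (|Q|⁻¹ ∫_Q g) 1_Q`. -/
def TS {n : ℕ} (g : (Fin n → ℝ) → ℝ≥0∞) (x : Fin n → ℝ) : ℝ≥0∞ :=
  ∑' q : ℕ × ℕ,
    (sCube n q.1 q.2).indicator
      (fun _ => (volume (sCube n q.1 q.2))⁻¹ * ∫⁻ y in sCube n q.1 q.2, g y) x

/-- The `j`-th digit (for `j ≥ 1`) of `t ∈ [0,1)` in base `2^k`, using the expansion
which is not eventually constant `2^k - 1`. -/
def digit (k j : ℕ) (t : ℝ) : ℤ := ⌊t * 2^(k*j)⌋ % 2^k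

/-- `Ω_m(k) ⊆ [0,1)^n`: the points all of whose coordinates have base-`2^k` digits
in `{0, …, 2^{k-1}-1}` for `1 ≤ j ≤ m-1`, with `m`-th digit equal to `2^{k-1}`. -/
def Omega (n k m : ℕ) : Set (Fin n → ℝ) :=
  {x | (∀ i, x i ∈ Set.Ico (0:ℝ) 1) ∧
    ∀ i, (∀ j, 1 ≤ j → j < m → digit k j (x i) < 2^(k-1)) ∧
      digit k m (x i) = 2^(k-1)}

/-- The weight `w_k = Σ_{m ≥ 1} (2^{kn}/(2^{(k-1)n}+1))^m 1_{Ω_m(k)}`. -/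
def wk (n k : ℕ) : (Fin n → ℝ) → ℝ≥0∞ := fun x =>
  ∑' m : ℕ,
    (Omega n k (m+1)).indicator
      (fun _ => ((2:ℝ≥0∞)^(k*n) / ((2:ℝ≥0∞)^((k-1)*n) + 1))^(m+1)) x

/-- `Q_1^m(k) = [2^{-k(m-1)-1}, 2^{-k(m-1)-1} + 2^{-km})^n`. -/
def Q1 (n k m : ℕ) : Set (Fin n → ℝ) :=
  Cube n (fun _ => (2:ℝ)^(-(k*(m-1) : ℤ) - 1)) ((2:ℝ)^(-(k*m : ℤ)))

/-- `Γ(k) = ⋃_{m ≥ 3} Q_1^m(k)`. -/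
def Gamma (n k : ℕ) : Set (Fin n → ℝ) := ⋃ m : ℕ, Q1 n k (m+3)

/-- `A_k = 2^{(k-1)n} (2^{(k-1)n}+1)^2`. -/
def Ak (n k : ℕ) : ℝ≥0∞ := 2^((k-1)*n) * (2^((k-1)*n) + 1)^2

/-- The weight `w(x) = Σ_{k ≥ 3} A_k w_k(x - 2⃗^k) 1_{Γ(k)}(x - 2⃗^k)`. -/
def bigW (n : ℕ) : (Fin n → ℝ) → ℝ≥0∞ := fun x =>
  ∑' k : ℕ,
    (Gamma n (k+3)).indicator (fun z => Ak n (k+3) * wk n (k+3) z)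
      (fun i => x i - (2:ℝ)^(k+3))

/-- The test function `f(x) = Σ_{k ≥ 3} k^{-ε} A_k w_k(x - 2⃗^k)`. -/
def bigF (n : ℕ) (ε : ℝ) : (Fin n → ℝ) → ℝ≥0∞ := fun x =>
  ∑' k : ℕ,
    ((k+3 : ℝ≥0∞) ^ (-ε)) * Ak n (k+3) * wk n (k+3) (fun i => x i - (2:ℝ)^(k+3))

/-- `T` is bounded from `L^p(v)` to `L^p(u)` (for nonnegative functions, which are
required to be supported in `supp v`): there is a finite constant `C` with
`‖Tf‖_{L^p(u)} ≤ C ‖f‖_{L^p(v)}` for all `f ∈ L^p(v)`. -/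
def BddOn {n : ℕ} (T : ((Fin n → ℝ) → ℝ≥0∞) → (Fin n → ℝ) → ℝ≥0∞)
    (p : ℝ) (v u : (Fin n → ℝ) → ℝ≥0∞) : Prop :=
  ∃ C : ℝ≥0∞, C ≠ ∞ ∧ ∀ f : (Fin n → ℝ) → ℝ≥0∞, Measurable f →
    (∀ x, v x = 0 → f x = 0) → (∫⁻ x, f x ^ p * v x) < ∞ →
    ∫⁻ x, T f x ^ p * u x ≤ C ^ p * ∫⁻ x, f x ^ p * v x

/-- The dual weight `u^{1-p'} 1_{supp u}`. -/
def dualW {n : ℕ} (u : (Fin n → ℝ) → ℝ≥0∞) (q : ℝ) : (Fin n → ℝ) → ℝ≥0∞ :=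
  fun x => if u x = 0 then 0 else u x ^ (1 - q)

/-!
The operator `T_S` is local: the cubes of `S` through a point of `[2^k, 2^k + 1)^n` are exactly the
translates by `2⃗^k` of the cubes of `S` through the corresponding point of `[0, 1)^n`. Hence
`T_S g (x + 2⃗^k) = T_S (g (· + 2⃗^k)) x` for `x ∈ [0, 1)^n`, and the right-hand side only sees `g`
on `[2^k, 2^k + 1)^n`. There only one summand of `f` survives, because each `w_j` is supported in
`[0, 1)^n` and distinct integer translates of that cube are disjoint.
-/

section LowerAverage

variable {α : Type*} [MeasurableSpace α]

theorem laverage_const_mul' {μ : Measure α} {c : ℝ≥0∞} (hc : c ≠ ∞) (g : α → ℝ≥0∞) :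
    ⨍⁻ y, c * g y ∂μ = c * ⨍⁻ y, g y ∂μ :=
  lintegral_const_mul' c g hc

theorem setLAverage_add_right_preimage [AddGroup α] [MeasurableAdd α] (μ : Measure α)
    [μ.IsAddRightInvariant] (g : α → ℝ≥0∞) (s : Set α) (v : α) :
    ⨍⁻ y in (· + v) ⁻¹' s, g (y + v) ∂μ = ⨍⁻ y in s, g y ∂μ := by
  rw [setLAverage_eq, setLAverage_eq, measure_preimage_add_right,
    (measurePreserving_add_right μ v).setLIntegral_comp_preimage_emb
      (measurableEmbedding_addRight v)]

end LowerAverage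

variable {n : ℕ}

section Cubes

theorem mem_cube_iff {a x : Fin n → ℝ} {l : ℝ} :
    x ∈ Cube n a l ↔ ∀ i, x i ∈ Ico (a i) (a i + l) := by
  simp only [Cube, mem_univ_pi]

theorem measurableSet_cube (a : Fin n → ℝ) (l : ℝ) : MeasurableSet (Cube n a l) :=
  MeasurableSet.univ_pi fun _ => measurableSet_Ico

theorem cube_subset_cube (a : Fin n → ℝ) {l l' : ℝ} (h : l ≤ l') : Cube n a l ⊆ Cube n a l' :=
  pi_mono fun _ _ => Ico_subset_Ico_right (by gcongr)

theorem preimage_add_right_cube (a v : Fin n → ℝ) (l : ℝ) :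
    (· + v) ⁻¹' Cube n a l = Cube n (a - v) l := by
  ext x
  simp only [mem_preimage, mem_cube_iff, Pi.add_apply, Pi.sub_apply, mem_Ico, sub_le_iff_le_add,
    sub_add_eq_add_sub, lt_sub_iff_add_lt]

theorem corner_eq_of_mem_unitCube [NeZero n] {a b : ℤ} {x : Fin n → ℝ}
    (ha : x ∈ Cube n (fun _ => a) 1) (hb : x ∈ Cube n (fun _ => b) 1) : a = b :=
  (Int.floor_eq_iff.2 (mem_cube_iff.1 ha 0)).symm.trans (Int.floor_eq_iff.2 (mem_cube_iff.1 hb 0))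

theorem tsum_intTranslates_eq_single [NeZero n] {ι M : Type*} [AddCommMonoid M]
    [TopologicalSpace M] {a : ι → ℤ} (ha : Function.Injective a) {g : ι → (Fin n → ℝ) → M}
    (hg : ∀ j, Function.support (g j) ⊆ Cube n (fun _ => 0) 1) (k : ι) {y : Fin n → ℝ}
    (hy : y ∈ Cube n (fun _ => 0) 1) :
    ∑' j, g j (fun i => y i + a k - a j) = g k y := by
  rw [tsum_eq_single k]
  · simp only [add_sub_cancel_right]
  · intro j hjk
    by_contra hne
    have hmem := mem_cube_iff.1 (hg j hne)
    refine hjk (ha (corner_eq_of_mem_unitCube (x := fun i => y i + a k)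
      (mem_cube_iff.2 fun i => ?_) (mem_cube_iff.2 fun i => ?_)))
    · exact ⟨by linarith [(hmem i).1], by linarith [(hmem i).2]⟩
    · have hyi := mem_cube_iff.1 hy i
      exact ⟨by linarith [hyi.1], by linarith [hyi.2]⟩

end Cubes

section SparseFamily

/-- The common coordinate of the corner shared by all cubes of `S_k`, as an integer: it is the
floor of every coordinate of every point of these cubes. -/
def sCorner (k : ℕ) : ℤ := if k = 0 then 0 else 2 ^ k

@[simp]
theorem sCorner_zero : sCorner 0 = 0 := rfl

theorem sCorner_of_ne_zero {k : ℕ} (hk : k ≠ 0) : sCorner k = 2 ^ k := if_neg hk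

theorem sCorner_injective : Function.Injective sCorner := by
  intro j k h
  unfold sCorner at h
  split_ifs at h with hj hk hk
  · rw [hj, hk]
  · exact absurd h.symm (pow_ne_zero k two_ne_zero)
  · exact absurd h (pow_ne_zero j two_ne_zero)
  · exact pow_right_injective₀ two_pos (by norm_num) h

theorem sCube_eq_cube (n k N : ℕ) :
    sCube n k N = Cube n (fun _ => (sCorner k : ℝ)) (2 ^ (-(N : ℤ))) := by
  unfold sCube sCorner
  push_cast
  rfl

theorem sCube_subset_unitCube (n k N : ℕ) : sCube n k N ⊆ Cube n (fun _ => (sCorner k : ℝ)) 1 := by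
  rw [sCube_eq_cube]
  exact cube_subset_cube _ (zpow_le_one_of_nonpos₀ one_le_two (by omega))

theorem preimage_add_sCorner_sCube (n k N : ℕ) :
    (· + fun _ => (sCorner k : ℝ)) ⁻¹' sCube n k N = sCube n 0 N := by
  rw [sCube_eq_cube, sCube_eq_cube, preimage_add_right_cube]
  congr 1
  ext
  simp

end SparseFamily

section SparseOperator

theorem ts_eq_tsum_laverage (g : (Fin n → ℝ) → ℝ≥0∞) (x : Fin n → ℝ) :
    TS g x = ∑' q : ℕ × ℕ,
      (sCube n q.1 q.2).indicator (fun _ => ⨍⁻ y in sCube n q.1 q.2, g y ∂volume) x := by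
  simp only [TS, setLAverage_eq, ENNReal.div_eq_inv_mul]

theorem ts_eq_tsum_of_mem_unitCube [NeZero n] (g : (Fin n → ℝ) → ℝ≥0∞) {k : ℕ} {x : Fin n → ℝ}
    (hx : x ∈ Cube n (fun _ => (sCorner k : ℝ)) 1) :
    TS g x = ∑' N, (sCube n k N).indicator (fun _ => ⨍⁻ y in sCube n k N, g y ∂volume) x := by
  rw [ts_eq_tsum_laverage, ENNReal.tsum_prod', tsum_eq_single k]
  intro j hjk
  refine ENNReal.tsum_eq_zero.2 fun N => indicator_of_notMem (fun hxj => hjk ?_) _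
  exact sCorner_injective (corner_eq_of_mem_unitCube (sCube_subset_unitCube n j N hxj) hx)

theorem ts_add_sCorner [NeZero n] (g : (Fin n → ℝ) → ℝ≥0∞) (k : ℕ) {x : Fin n → ℝ}
    (hx : x ∈ Cube n (fun _ => 0) 1) :
    TS g (x + fun _ => (sCorner k : ℝ)) = TS (fun y => g (y + fun _ => (sCorner k : ℝ))) x := by
  set v : Fin n → ℝ := fun _ => (sCorner k : ℝ)
  have hxv : x + v ∈ Cube n v 1 := by
    rw [← mem_preimage (f := (· + v)), preimage_add_right_cube, sub_self]
    exact hx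
  rw [ts_eq_tsum_of_mem_unitCube g hxv,
    ts_eq_tsum_of_mem_unitCube _ (k := 0) (by simpa using hx)]
  refine tsum_congr fun N => ?_
  rw [← preimage_add_sCorner_sCube n k N, setLAverage_add_right_preimage]
  rfl

theorem ts_congr_of_mem_unitCube [NeZero n] {g h : (Fin n → ℝ) → ℝ≥0∞} {k : ℕ}
    (hgh : EqOn g h (Cube n (fun _ => (sCorner k : ℝ)) 1)) {x : Fin n → ℝ}
    (hx : x ∈ Cube n (fun _ => (sCorner k : ℝ)) 1) : TS g x = TS h x := by
  rw [ts_eq_tsum_of_mem_unitCube g hx, ts_eq_tsum_of_mem_unitCube h hx]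
  refine tsum_congr fun N => ?_
  have hmeas : MeasurableSet (sCube n k N) := measurableSet_cube _ _
  rw [setLAverage_congr_fun hmeas (hgh.mono (sCube_subset_unitCube n k N))]

theorem ts_const_mul {c : ℝ≥0∞} (hc : c ≠ ∞) (g : (Fin n → ℝ) → ℝ≥0∞) (x : Fin n → ℝ) :
    TS (fun y => c * g y) x = c * TS g x := by
  simp only [ts_eq_tsum_laverage, laverage_const_mul' hc, ← ENNReal.tsum_mul_left,
    indicator_const_mul]

end SparseOperator

section TestFunction

theorem support_wk_subset (n k : ℕ) : Function.support (wk n k) ⊆ Cube n (fun _ => 0) 1 := by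
  refine Function.support_subset_iff'.2 fun x hx => ENNReal.tsum_eq_zero.2 fun m => ?_
  refine indicator_of_notMem (fun hΩ => hx (mem_cube_iff.2 fun i => ?_)) _
  simpa only [zero_add] using hΩ.1 i

theorem bigF_add_two_pow [NeZero n] (ε : ℝ) {k : ℕ} (hk : 3 ≤ k) {y : Fin n → ℝ}
    (hy : y ∈ Cube n (fun _ => 0) 1) :
    bigF n ε (y + fun _ => (2 : ℝ) ^ k) = (k : ℝ≥0∞) ^ (-ε) * Ak n k * wk n k y := by
  obtain ⟨m, rfl⟩ := Nat.exists_eq_add_of_le' hk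
  have hinj : Function.Injective fun j : ℕ => (2 : ℤ) ^ (j + 3) := fun i j hij =>
    Nat.add_right_cancel (pow_right_injective₀ two_pos (by norm_num) hij)
  have hsupp (j : ℕ) : Function.support
      (fun z => ((j + 3 : ℕ) : ℝ≥0∞) ^ (-ε) * Ak n (j + 3) * wk n (j + 3) z) ⊆
      Cube n (fun _ => 0) 1 :=
    (Function.support_mul_subset_right _ _).trans (support_wk_subset n (j + 3))
  rw [← tsum_intTranslates_eq_single hinj hsupp m hy]
  simp only [bigF, Pi.add_apply]
  push_cast
  rfl

theorem natCast_rpow_mul_Ak_ne_top (ε : ℝ) {k : ℕ} (hk : k ≠ 0) :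
    (k : ℝ≥0∞) ^ (-ε) * Ak n k ≠ ∞ := by
  have hpow : (k : ℝ≥0∞) ^ (-ε) ≠ ∞ :=
    rpow_ne_top_of_ne_zero (by exact_mod_cast hk) (natCast_ne_top k)
  unfold Ak
  finiteness

end TestFunction

theorem sparse_f_shift_formula_general (hn : 1 ≤ n) (ε : ℝ) {k : ℕ} (hk : 3 ≤ k)
    {x : Fin n → ℝ} (hx : x ∈ Cube n (fun _ => 0) 1) :
    TS (bigF n ε) (fun i => x i + (2 : ℝ) ^ k)
      = (k : ℝ≥0∞) ^ (-ε) * Ak n k * TS (wk n k) x := by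
  have : NeZero n := ⟨by omega⟩
  have hk0 : k ≠ 0 := by omega
  calc TS (bigF n ε) (x + fun _ => (2 : ℝ) ^ k)
      = TS (fun y => bigF n ε (y + fun _ => (2 : ℝ) ^ k)) x := by
        simpa [sCorner_of_ne_zero hk0] using ts_add_sCorner (bigF n ε) k hx
    _ = TS (fun y => (k : ℝ≥0∞) ^ (-ε) * Ak n k * wk n k y) x :=
        ts_congr_of_mem_unitCube (k := 0)
          (fun _ hy => bigF_add_two_pow ε hk (by simpa using hy)) (by simpa using hx)
    _ = (k : ℝ≥0∞) ^ (-ε) * Ak n k * TS (wk n k) x :=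
        ts_const_mul (natCast_rpow_mul_Ak_ne_top ε hk0) (wk n k) x

/-- For `n ≥ 1`, `p ∈ (1,∞)` with `p' = p/(p-1)`, `ε ∈ (1/p', 1)`,
`k ≥ 3`, and every `x ∈ [0,1)^n`: `T_S f(x + 2⃗^k) = k^{-ε} A_k T_S(w_k)(x)`. -/
theorem sparse_f_shift_formula (n : ℕ) (hn : 1 ≤ n) (p : ℝ) (hp : 1 < p)
    (ε : ℝ) (hε1 : 1 / (p/(p-1)) < ε) (hε2 : ε < 1)
    (k : ℕ) (hk : 3 ≤ k) (x : Fin n → ℝ) (hx : x ∈ Cube n (fun _ => 0) 1) :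
    TS (bigF n ε) (fun i => x i + (2:ℝ)^k)
      = (k : ℝ≥0∞) ^ (-ε) * Ak n k * TS (wk n k) x := by
  exact sparse_f_shift_formula_general hn ε hk hx
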